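/- Let G be an n-vertex graph whose depth-1 minors all have edge density at most c and which excludes K_{3,t} as a depth-1 minor, for constants c ≥ 1, t ≥ 3. Then the modified Lenzen et al. algorithm (with threshold 2c in Phase 1) outputs a dominating set of size at most (6c²t + (2t+5)c + 4)·γ(G). -/

import Mathlib

open Set

/-- The closed neighborhood `N[v]` of a vertex. -/
def closedNbr {V : Type} (G : SimpleGraph V) (v : V) : Set V :=
  insert v (G.neighborSet v)

/-- `N[A] = ⋃ a ∈ A, N[a]`. -/
def closedNbrs {V : Type} (G : SimpleGraph V) (A : Set V) : Set V :=
  ⋃ a ∈ A, closedNbr G a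

/-- `D` is a dominating set of `G`. -/
def IsDominatingSet {V : Type} (G : SimpleGraph V) (D : Set V) : Prop :=
  ∀ v : V, v ∈ closedNbrs G D

/-- The domination number `γ(G)`. -/
noncomputable def gamma {V : Type} [Fintype V] (G : SimpleGraph V) : ℕ :=
  sInf {n | ∃ D : Set V, IsDominatingSet G D ∧ D.ncard = n}

/-- `S` induces a star in `G`. -/
def IsStarIn {V : Type} (G : SimpleGraph V) (S : Set V) : Prop :=
  ∃ c ∈ S, ∀ v ∈ S, v = c ∨ G.Adj c v

/-- `H` is a depth-1 minor of `G`. -/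
def IsDepth1Minor {V W : Type} (G : SimpleGraph V) (H : SimpleGraph W) : Prop :=
  ∃ B : W → Set V,
    (∀ w, IsStarIn G (B w)) ∧
    (Pairwise fun w₁ w₂ => Disjoint (B w₁) (B w₂)) ∧
    ∀ ⦃w₁ w₂⦄, H.Adj w₁ w₂ → ∃ v₁ ∈ B w₁, ∃ v₂ ∈ B w₂, G.Adj v₁ v₂

/-!
Fix a minimum dominating set `M`, put `k = ⌊2c⌋`, and partition `V` into stars by sending every
vertex to a dominator `π v ∈ M`.

A vertex `v ∉ M` chosen in Phase 1 has neighbors in more than `k` of these stars, since otherwise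
`π(N(v))` would be a small set dominating `N(v)`. For an independent set `I` of such vertices,
contracting the stars with `I` removed gives a bipartite depth-1 minor on `I ⊔ M` with at least
`(k+1)|I|` edges, so the density bound forces `|I| ≤ |M|`. As `G` is `k`-degenerate, there are at
most `(k+1)|M|` vertices with neighbors in more than `k` stars.

For `m ∈ M \ D` fix at most `k` vertices `A m`, all different from `m`, that dominate `N(m)`. Let
`w` lie outside `M` and all `A m`, with neighbors in at most `k` stars. Its residual neighborhood
lies in `w` together with at most `k` sets `{m} ∪ (N(m) ∩ N(w))`, and each `N(m) ∩ N(w)` has at most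
`t * k` elements: it is dominated by `A m`, and three distinct vertices `m`, `w`, `a` have fewer
than `t` common neighbors. Since dominators are chosen greedily, each `N[m]` with `m ∈ M` contains
at most `t * k ^ 2 + k + 1` undominated vertices whose dominator is such a `w`.
-/

section Counting

variable {V ι : Type*}

theorem ncard_biUnion_le_mul [Finite ι] {s : Set ι} {f : ι → Set V} {n : ℕ}
    (h : ∀ i ∈ s, (f i).ncard ≤ n) : (⋃ i ∈ s, f i).ncard ≤ n * s.ncard := by
  classical
  have hs := s.toFinite
  calc (⋃ i ∈ s, f i).ncard
      = (⋃ i ∈ hs.toFinset, f i).ncard := by simp only [Set.Finite.mem_toFinset]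
    _ ≤ ∑ i ∈ hs.toFinset, (f i).ncard := hs.toFinset.set_ncard_biUnion_le f
    _ ≤ hs.toFinset.card • n := Finset.sum_le_card_nsmul _ _ _ (by simpa using h)
    _ = n * s.ncard := by rw [smul_eq_mul, mul_comm, Set.ncard_eq_toFinset_card s hs]

end Counting

section Graph

open SimpleGraph

variable {V : Type*} {G : SimpleGraph V}

theorem exists_degree_le_two_mul [Fintype V] [Nonempty V] [DecidableRel G.Adj] {c : ℝ}
    (h : (G.edgeSet.ncard : ℝ) ≤ c * Fintype.card V) : ∃ v, (G.degree v : ℝ) ≤ 2 * c := by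
  have hsum : (∑ v, (G.degree v : ℝ)) = 2 * G.edgeSet.ncard := by
    rw [← coe_edgeFinset, Set.ncard_coe_finset]
    exact_mod_cast G.sum_degrees_eq_twice_card_edges
  obtain ⟨v, -, hv⟩ := Finset.exists_le_of_sum_le (s := Finset.univ) Finset.univ_nonempty
    (f := fun v ↦ (G.degree v : ℝ)) (g := fun _ ↦ 2 * c) (by
      rw [hsum, Finset.sum_const, Finset.card_univ, nsmul_eq_mul]
      linarith)
  exact ⟨v, hv⟩

theorem ncard_neighborSet_inter_eq_degree_induce {S : Set V} [Fintype S]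
    [DecidableRel (G.induce S).Adj] (v : S) :
    (G.neighborSet v ∩ S).ncard = (G.induce S).degree v := by
  have himage : Subtype.val '' (G.induce S).neighborSet v = G.neighborSet v ∩ S := by
    ext x
    simp [and_comm]
  rw [← card_neighborSet_eq_degree, ← Nat.card_eq_fintype_card, Nat.card_coe_set_eq, ← himage,
    Set.ncard_image_of_injective _ Subtype.val_injective]

theorem exists_isIndepSet_of_forall_exists_ncard_le [Finite V] {k : ℕ}
    (h : ∀ S : Set V, S.Nonempty → ∃ v ∈ S, (G.neighborSet v ∩ S).ncard ≤ k) (S : Set V) :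
    ∃ I ⊆ S, G.IsIndepSet I ∧ S.ncard ≤ (k + 1) * I.ncard := by
  induction S using WellFoundedLT.induction with
  | ind S ih =>
    obtain rfl | hS := S.eq_empty_or_nonempty
    · exact ⟨∅, subset_rfl, Set.pairwise_empty _, by simp⟩
    obtain ⟨v, hvS, hdeg⟩ := h S hS
    let T := insert v (G.neighborSet v ∩ S)
    have hT : T.ncard ≤ k + 1 := (Set.ncard_insert_le _ _).trans (by lia)
    obtain ⟨I, hIS, hI, hcard⟩ := ih (S \ T)
      ⟨Set.sdiff_subset, fun hsub ↦ (hsub hvS).2 (Set.mem_insert _ _)⟩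
    have hvI : v ∉ I := fun hv ↦ (hIS hv).2 (Set.mem_insert _ _)
    have hnadj : ∀ b ∈ I, ¬G.Adj v b := fun b hb hvb ↦ (hIS hb).2 (Or.inr ⟨hvb, (hIS hb).1⟩)
    refine ⟨insert v I, Set.insert_subset hvS (hIS.trans Set.sdiff_subset), ?_, ?_⟩
    · exact hI.insert fun b hb _ ↦ ⟨hnadj b hb, fun hbv ↦ hnadj b hb hbv.symm⟩
    · rw [Set.ncard_insert_of_notMem hvI]
      have := Set.ncard_le_ncard_sdiff_add_ncard S T
      lia

theorem ncard_iInter_neighborSet_lt_of_free {α β : Type*} [Fintype α] [Fintype β] [Finite V]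
    (h : (completeBipartiteGraph α β).Free G) {S : Finset V} (hS : S.card = Fintype.card α) :
    (⋂ v ∈ S, G.neighborSet v).ncard < Fintype.card β := by
  by_contra! hle
  obtain ⟨T, hT, hTcard⟩ := Set.exists_subset_card_eq hle
  refine h (completeBipartiteGraph_isContained_iff.2
    ⟨S, T.toFinite.toFinset, hS, ?_, fun v hv u hu ↦ ?_⟩)
  · rw [← hTcard, Set.ncard_eq_toFinset_card T]
  · exact Set.mem_iInter₂.1 (hT (by simpa using hu)) v hv

end Graph

section IncidenceGraph

open SimpleGraph

variable {α β : Type*}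

/-- The bipartite incidence graph of a family of sets `f : α → Set β`, in which `i : α` is joined
to the elements of `f i`. The density bound is applied to a minor of this form. -/
def incidenceGraph (f : α → Set β) : SimpleGraph (α ⊕ β) where
  Adj
    | .inl i, .inr b => b ∈ f i
    | .inr b, .inl i => b ∈ f i
    | _, _ => False
  symm := ⟨by rintro (i | b) (j | b') h <;> exact h⟩
  loopless := ⟨by rintro (i | b) h <;> exact h⟩

theorem mul_card_le_ncard_edgeSet_incidenceGraph [Fintype α] [Finite β] {f : α → Set β} {d : ℕ}
    (h : ∀ i, d ≤ (f i).ncard) : d * Fintype.card α ≤ (incidenceGraph f).edgeSet.ncard := by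
  classical
  have := Fintype.ofFinite β
  have hbip : (incidenceGraph f).IsBipartiteWith
      (Finset.univ.map Function.Embedding.inl : Finset (α ⊕ β))
      (Finset.univ.map Function.Embedding.inr : Finset (α ⊕ β)) := by
    refine ⟨by simp [Set.disjoint_left], ?_⟩
    rintro (i | b) (j | b') hadj <;> simp_all [incidenceGraph]
  have hdeg : ∀ i, (incidenceGraph f).degree (.inl i) = (f i).ncard := fun i ↦ by
    have hnbr : (incidenceGraph f).neighborSet (.inl i) = Sum.inr '' f i := by
      ext (j | b) <;> simp [incidenceGraph]
    rw [← card_neighborSet_eq_degree, ← Nat.card_eq_fintype_card, Nat.card_coe_set_eq, hnbr,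
      Set.ncard_image_of_injective _ Sum.inr_injective]
  calc d * Fintype.card α
      ≤ ∑ i, (incidenceGraph f).degree (.inl i) := by
        rw [mul_comm, ← smul_eq_mul, ← Finset.card_univ]
        exact Finset.card_nsmul_le_sum _ _ _ fun i _ ↦ (hdeg i).symm ▸ h i
    _ = (incidenceGraph f).edgeFinset.card := by
        rw [← isBipartiteWith_sum_degrees_eq_card_edges hbip, Finset.sum_map]
        rfl
    _ = (incidenceGraph f).edgeSet.ncard := by rw [← coe_edgeFinset, Set.ncard_coe_finset]

end IncidenceGraph

section Domination

variable {V : Type} {G : SimpleGraph V} {A D M : Set V} {v w : V}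

theorem mem_closedNbr : v ∈ closedNbr G w ↔ v = w ∨ G.Adj w v :=
  Iff.rfl

theorem mem_closedNbr_self : v ∈ closedNbr G v :=
  Set.mem_insert _ _

theorem mem_closedNbr_comm : v ∈ closedNbr G w ↔ w ∈ closedNbr G v := by
  rw [mem_closedNbr, mem_closedNbr, eq_comm, G.adj_comm]

theorem mem_closedNbrs : v ∈ closedNbrs G A ↔ ∃ a ∈ A, v ∈ closedNbr G a := by
  simp only [closedNbrs, Set.mem_iUnion, exists_prop]

theorem closedNbr_subset_closedNbrs (hv : v ∈ A) : closedNbr G v ⊆ closedNbrs G A :=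
  fun _ hu ↦ mem_closedNbrs.2 ⟨v, hv, hu⟩

theorem isDominatingSet_univ : IsDominatingSet G Set.univ :=
  fun v ↦ closedNbr_subset_closedNbrs (Set.mem_univ v) mem_closedNbr_self

theorem exists_isDominatingSet_ncard_eq_gamma [Fintype V] (G : SimpleGraph V) :
    ∃ M, IsDominatingSet G M ∧ M.ncard = gamma G :=
  Nat.sInf_mem (s := {n | ∃ D : Set V, IsDominatingSet G D ∧ D.ncard = n})
    ⟨_, Set.univ, isDominatingSet_univ, rfl⟩

theorem isDominatingSet_union_image {dom : V → V}
    (hdom : ∀ v ∉ closedNbrs G D, dom v ∈ closedNbr G v) :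
    IsDominatingSet G (D ∪ dom '' (closedNbrs G D)ᶜ) := by
  intro v
  by_cases hv : v ∈ closedNbrs G D
  · obtain ⟨a, ha, hva⟩ := mem_closedNbrs.1 hv
    exact mem_closedNbrs.2 ⟨a, Or.inl ha, hva⟩
  · exact mem_closedNbrs.2
      ⟨dom v, Or.inr (Set.mem_image_of_mem dom hv), mem_closedNbr_comm.1 (hdom v hv)⟩

theorem IsDominatingSet.ncard_le_mul [Finite V] (hM : IsDominatingSet G M) {S : Set V} {n : ℕ}
    (h : ∀ m ∈ M, (S ∩ closedNbr G m).ncard ≤ n) : S.ncard ≤ n * M.ncard := by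
  have hcover : S ⊆ ⋃ m ∈ M, S ∩ closedNbr G m := fun v hv ↦ by
    obtain ⟨m, hm, hvm⟩ := mem_closedNbrs.1 (hM v)
    exact Set.mem_biUnion hm ⟨hv, hvm⟩
  exact (Set.ncard_le_ncard hcover).trans (ncard_biUnion_le_mul h)

/-- `π` maps each vertex to a dominator of it in `M`, each vertex of `M` to itself. Its fibers
partition `V` into stars centered at the vertices of `M`. -/
structure IsDominatorMap (G : SimpleGraph V) (M : Set V) (π : V → V) : Prop where
  mem (v : V) : π v ∈ M
  map_eq_self {v : V} (hv : v ∈ M) : π v = v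
  mem_closedNbr (v : V) : v ∈ closedNbr G (π v)

theorem IsDominatingSet.exists_isDominatorMap (hM : IsDominatingSet G M) :
    ∃ π, IsDominatorMap G M π := by
  have hchoice : ∀ v, ∃ m ∈ M, (v ∈ M → m = v) ∧ v ∈ closedNbr G m := fun v ↦ by
    by_cases hv : v ∈ M
    · exact ⟨v, hv, fun _ ↦ rfl, mem_closedNbr_self⟩
    · obtain ⟨m, hm, hvm⟩ := mem_closedNbrs.1 (hM v)
      exact ⟨m, hm, fun h ↦ absurd h hv, hvm⟩
  choose π hmem hself hnbr using hchoice
  exact ⟨π, hmem, hself _, hnbr⟩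

end Domination

section DepthOneMinor

open SimpleGraph

variable {V W : Type} {G : SimpleGraph V} {H : SimpleGraph W}

theorem isStarIn_singleton (v : V) : IsStarIn G {v} :=
  ⟨v, rfl, fun _ hu ↦ Or.inl hu⟩

theorem isDepth1Minor_of_isContained (h : H ⊑ G) : IsDepth1Minor G H := by
  obtain ⟨f⟩ := h
  refine ⟨fun w ↦ {f w}, fun w ↦ isStarIn_singleton _, fun w₁ w₂ hne ↦ ?_, fun w₁ w₂ hadj ↦ ?_⟩
  · exact Set.disjoint_singleton.2 (f.injective.ne hne)
  · exact ⟨f w₁, rfl, f w₂, rfl, f.toHom.map_adj hadj⟩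

/-- Contract each fiber of `π`, with the vertices of `I` removed, to its center in `M`. -/
theorem IsDominatorMap.isDepth1Minor_incidenceGraph {M I : Set V} {π : V → V}
    (hπ : IsDominatorMap G M π) (hI : G.IsIndepSet I) (hIM : Disjoint I M) :
    IsDepth1Minor G (incidenceGraph fun v : I ↦ {m : M | m.1 ∈ π '' G.neighborSet v}) := by
  let B : I ⊕ M → Set V := Sum.elim (fun v ↦ {v.1}) fun m ↦ {u | u ∉ I ∧ π u = m}
  have hedge : ∀ (v : I) (m : M), m.1 ∈ π '' G.neighborSet v → ∃ u ∈ B (.inr m), G.Adj v u := by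
    rintro v m ⟨u, hvu, hum⟩
    exact ⟨u, ⟨fun hu ↦ hI v.2 hu hvu.ne hvu, hum⟩, hvu⟩
  refine ⟨B, ?_, ?_, ?_⟩
  · rintro (v | m)
    · exact isStarIn_singleton v.1
    · refine ⟨m, ⟨hIM.notMem_of_mem_right m.2, hπ.map_eq_self m.2⟩, ?_⟩
      rintro u ⟨-, hu⟩
      exact hu ▸ hπ.mem_closedNbr u
  · rintro (v | m) (v' | m') hne <;> refine Set.disjoint_left.2 fun x hx hx' ↦ ?_
    · exact hne (congrArg _ (Subtype.ext (hx.symm.trans hx')))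
    · exact hx'.1 (hx ▸ v.2)
    · exact hx.1 (hx' ▸ v'.2)
    · exact hne (congrArg _ (Subtype.ext (hx.2.symm.trans hx'.2)))
  · rintro (v | m) (v' | m') hadj
    · exact hadj.elim
    · obtain ⟨u, hu, hvu⟩ := hedge v m' hadj
      exact ⟨v, rfl, u, hu, hvu⟩
    · obtain ⟨u, hu, hvu⟩ := hedge v' m hadj
      exact ⟨u, hu, v', rfl, hvu.symm⟩
    · exact hadj.elim

/-- All finite depth-1 minors of `G` have edge density `|E| / |V|` at most `c`, i.e. `∇₁(G) ≤ c`. -/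
def Depth1DensityLE (G : SimpleGraph V) (c : ℝ) : Prop :=
  ∀ (W : Type) [Fintype W] (H : SimpleGraph W), IsDepth1Minor G H →
    (H.edgeSet.ncard : ℝ) ≤ c * Fintype.card W

variable [Finite V] {c : ℝ} {k : ℕ}

theorem Depth1DensityLE.exists_ncard_neighborSet_inter_le (hG : Depth1DensityLE G c)
    (hk : 2 * c < k + 1) {S : Set V} (hS : S.Nonempty) :
    ∃ v ∈ S, (G.neighborSet v ∩ S).ncard ≤ k := by
  classical
  have := Fintype.ofFinite V
  have := hS.to_subtype
  obtain ⟨v, hv⟩ := exists_degree_le_two_mul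
    (hG S (G.induce S) (isDepth1Minor_of_isContained ⟨Copy.induce G S⟩))
  refine ⟨v, v.2, ?_⟩
  rw [ncard_neighborSet_inter_eq_degree_induce]
  exact Nat.lt_succ_iff.1 (by exact_mod_cast hv.trans_lt hk)

theorem Depth1DensityLE.ncard_le_of_isIndepSet (hG : Depth1DensityLE G c)
    (hk : 2 * c < k + 1) {M I : Set V} {π : V → V} (hπ : IsDominatorMap G M π)
    (hI : G.IsIndepSet I) (hIM : Disjoint I M)
    (hbusy : ∀ v ∈ I, k < (π '' G.neighborSet v).ncard) : I.ncard ≤ M.ncard := by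
  have := Fintype.ofFinite I
  have := Fintype.ofFinite M
  have hdeg : ∀ v : I, k + 1 ≤ {m : M | m.1 ∈ π '' G.neighborSet v}.ncard := fun v ↦ by
    have hsub : π '' G.neighborSet v ⊆ Set.range (Subtype.val : M → V) := by
      rintro _ ⟨u, -, rfl⟩
      exact ⟨⟨π u, hπ.mem u⟩, rfl⟩
    have := Set.ncard_preimage_of_injective_subset_range Subtype.val_injective hsub
    exact this.symm ▸ hbusy v v.2
  have hlow := mul_card_le_ncard_edgeSet_incidenceGraph hdeg
  have hupp := hG _ _ (hπ.isDepth1Minor_incidenceGraph hI hIM)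
  rw [Fintype.card_sum, ← Nat.card_eq_fintype_card, ← Nat.card_eq_fintype_card (α := M),
    Nat.card_coe_set_eq, Nat.card_coe_set_eq] at hupp
  rw [← Nat.card_eq_fintype_card, Nat.card_coe_set_eq] at hlow
  have hmul : ((k : ℝ) + 1) * I.ncard ≤ c * (I.ncard + M.ncard) := by
    exact_mod_cast (Nat.cast_le.2 hlow).trans hupp
  by_contra! hlt
  have hlt' : (M.ncard : ℝ) < I.ncard := by exact_mod_cast hlt
  have hpos : (0 : ℝ) < I.ncard + M.ncard := by linarith [M.ncard.cast_nonneg (α := ℝ)]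
  have hlow' : ((k : ℝ) + 1) * I.ncard < (k + 1) * M.ncard := by
    linarith [mul_lt_mul_of_pos_right hk hpos]
  exact hlt'.not_gt (lt_of_mul_lt_mul_left hlow' (by positivity))

/-- The vertices outside `M` whose neighbors are spread over more than `k` fibers of `π`: the only
ones outside `M` that Phase 1 can choose. -/
def busySet (G : SimpleGraph V) (M : Set V) (π : V → V) (k : ℕ) : Set V :=
  {v | v ∉ M ∧ k < (π '' G.neighborSet v).ncard}

theorem Depth1DensityLE.ncard_busySet_le (hG : Depth1DensityLE G c)
    (hk : 2 * c < k + 1) {M : Set V} {π : V → V} (hπ : IsDominatorMap G M π) :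
    (busySet G M π k).ncard ≤ (k + 1) * M.ncard := by
  obtain ⟨I, hIsub, hI, hcard⟩ := exists_isIndepSet_of_forall_exists_ncard_le
    (fun S hS ↦ hG.exists_ncard_neighborSet_inter_le hk (S := S) hS) (busySet G M π k)
  have hIM : I.ncard ≤ M.ncard := hG.ncard_le_of_isIndepSet hk hπ hI
    (Set.disjoint_left.2 fun v hv ↦ (hIsub hv).1) fun v hv ↦ (hIsub hv).2
  exact hcard.trans (Nat.mul_le_mul_left _ hIM)

end DepthOneMinor

section Algorithm

variable {V : Type} {G : SimpleGraph V} {A D M : Set V} {k : ℕ} {v w : V} {π : V → V}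

/-- `A` is a witness that Phase 1 with threshold `k` leaves `v` out: at most `k` vertices, all
different from `v`, which dominate the open neighborhood of `v`. -/
structure IsNbrCover (G : SimpleGraph V) (k : ℕ) (v : V) (A : Set V) : Prop where
  notMem : v ∉ A
  ncard_le : A.ncard ≤ k
  neighborSet_subset : G.neighborSet v ⊆ closedNbrs G A

/-- The set `D` computed by Phase 1 with threshold `k`. -/
def phaseOneSet (G : SimpleGraph V) (k : ℕ) : Set V :=
  {v | ¬∃ A, IsNbrCover G k v A}

/-- The residual neighborhood `N[w] \ N[D]`, whose size is the residual degree of `w`. -/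
def residualNbr (G : SimpleGraph V) (D : Set V) (w : V) : Set V :=
  closedNbr G w \ closedNbrs G D

theorem phaseOneSet_floor {r : ℝ} (hr : 0 ≤ r) :
    phaseOneSet G ⌊r⌋₊ =
      {v | ¬∃ A : Set V, v ∉ A ∧ (A.ncard : ℝ) ≤ r ∧ G.neighborSet v ⊆ closedNbrs G A} := by
  ext v
  refine not_congr (exists_congr fun A ↦ ?_)
  rw [← Nat.le_floor_iff hr]
  exact ⟨fun h ↦ ⟨h.1, h.2, h.3⟩, fun h ↦ ⟨h.1, h.2.1, h.2.2⟩⟩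

theorem phaseOneSet_subset (hπ : IsDominatorMap G M π) :
    phaseOneSet G k ⊆ M ∪ busySet G M π k := by
  intro v hv
  by_contra! hcon
  obtain ⟨hvM, hvbusy⟩ := not_or.1 hcon
  refine hv ⟨π '' G.neighborSet v, ?_, not_lt.1 fun hlt ↦ hvbusy ⟨hvM, hlt⟩, fun u hu ↦ ?_⟩
  · rintro ⟨u, -, rfl⟩
    exact hvM (hπ.mem u)
  · exact closedNbr_subset_closedNbrs (Set.mem_image_of_mem π hu) (hπ.mem_closedNbr u)

theorem residualNbr_subset (hπ : IsDominatorMap G M π) :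
    residualNbr G D w ⊆
      insert w (⋃ m ∈ π '' G.neighborSet w \ D, insert m (G.commonNeighbors m w)) := by
  rintro u ⟨rfl | hwu, huD⟩
  · exact Set.mem_insert _ _
  · refine Or.inr (Set.mem_biUnion ⟨Set.mem_image_of_mem π hwu, fun h ↦ ?_⟩ ?_)
    · exact huD (closedNbr_subset_closedNbrs h (hπ.mem_closedNbr u))
    · exact (hπ.mem_closedNbr u).imp_right fun hadj ↦ ⟨hadj, hwu⟩

variable [Finite V] {t : ℕ}

theorem IsNbrCover.ncard_commonNeighbors_le (hA : IsNbrCover G k v A)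
    (hfree : (completeBipartiteGraph (Fin 3) (Fin t)).Free G) (hvw : v ≠ w) (hwA : w ∉ A) :
    (G.commonNeighbors v w).ncard ≤ t * k := by
  classical
  have hcover : G.commonNeighbors v w ⊆
      ⋃ a ∈ A, insert a (⋂ x ∈ ({v, w, a} : Finset V), G.neighborSet x) := by
    rintro u ⟨hvu, hwu⟩
    obtain ⟨a, ha, hua⟩ := mem_closedNbrs.1 (hA.neighborSet_subset hvu)
    refine Set.mem_biUnion ha (hua.imp_right fun hau ↦ ?_)
    simpa using ⟨hvu, hwu, hau⟩
  have htriple : ∀ a ∈ A,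
      (insert a (⋂ x ∈ ({v, w, a} : Finset V), G.neighborSet x)).ncard ≤ t := fun a ha ↦ by
    have hcard : ({v, w, a} : Finset V).card = Fintype.card (Fin 3) :=
      Finset.card_eq_three.2
        ⟨v, w, a, hvw, fun h ↦ hA.notMem (h ▸ ha), fun h ↦ hwA (h ▸ ha), rfl⟩
    have hlt := ncard_iInter_neighborSet_lt_of_free hfree hcard
    rw [Fintype.card_fin] at hlt
    exact (Set.ncard_insert_le _ _).trans hlt
  calc (G.commonNeighbors v w).ncard
      ≤ t * A.ncard := (Set.ncard_le_ncard hcover).trans (ncard_biUnion_le_mul htriple)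
    _ ≤ t * k := Nat.mul_le_mul_left _ hA.ncard_le

theorem ncard_residualNbr_le (hπ : IsDominatorMap G M π)
    (hfree : (completeBipartiteGraph (Fin 3) (Fin t)).Free G) {A : V → Set V}
    (hA : ∀ m ∈ M \ D, IsNbrCover G k m (A m))
    (hw : w ∉ M ∪ busySet G M π k ∪ ⋃ m ∈ M \ D, A m) :
    (residualNbr G D w).ncard ≤ t * k ^ 2 + k + 1 := by
  simp only [Set.mem_union, not_or] at hw
  obtain ⟨⟨hwM, hwbusy⟩, hwA⟩ := hw
  let Q := π '' G.neighborSet w \ D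
  have hQ : Q.ncard ≤ k :=
    (Set.ncard_le_ncard Set.sdiff_subset).trans (not_lt.1 fun hlt ↦ hwbusy ⟨hwM, hlt⟩)
  have hcommon : ∀ m ∈ Q, (insert m (G.commonNeighbors m w)).ncard ≤ t * k + 1 := by
    rintro m ⟨⟨u, -, rfl⟩, hmD⟩
    have hm : π u ∈ M \ D := ⟨hπ.mem u, hmD⟩
    have hne : π u ≠ w := fun h ↦ hwM (h ▸ hm.1)
    have hle := (hA _ hm).ncard_commonNeighbors_le hfree hne fun h ↦ hwA (Set.mem_biUnion hm h)
    exact (Set.ncard_insert_le _ _).trans (Nat.succ_le_succ hle)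
  calc (residualNbr G D w).ncard
      ≤ (⋃ m ∈ Q, insert m (G.commonNeighbors m w)).ncard + 1 :=
        (Set.ncard_le_ncard (residualNbr_subset hπ)).trans (Set.ncard_insert_le _ _)
    _ ≤ (t * k + 1) * k + 1 := by
        grw [ncard_biUnion_le_mul hcommon, hQ]
    _ = t * k ^ 2 + k + 1 := by ring

/-- `d` is an admissible choice of `dom(v)` in Phase 2: it dominates `v` and has maximum residual
degree among the dominators of `v`. -/
def IsGreedyDominator (G : SimpleGraph V) (D : Set V) (v d : V) : Prop :=
  d ∈ closedNbr G v ∧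
    ∀ w ∈ closedNbr G v, (residualNbr G D w).ncard ≤ (residualNbr G D d).ncard

/-- Charge each vertex to a dominator `m` in `M`: `N[m]` holds no more undominated vertices than
the residual degree of any chosen dominator of one of them. -/
theorem IsDominatingSet.ncard_greedy_notMem_le (hM : IsDominatingSet G M) {dom : V → V}
    (hdom : ∀ v ∉ closedNbrs G D, IsGreedyDominator G D v (dom v)) {X : Set V} {n : ℕ}
    (hX : ∀ w ∉ X, (residualNbr G D w).ncard ≤ n) :
    {v | v ∉ closedNbrs G D ∧ dom v ∉ X}.ncard ≤ n * M.ncard := by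
  refine hM.ncard_le_mul fun m _ ↦ ?_
  obtain hempty | ⟨v, ⟨hvD, hvX⟩, hvm⟩ :=
    ({v | v ∉ closedNbrs G D ∧ dom v ∉ X} ∩ closedNbr G m).eq_empty_or_nonempty
  · simp [hempty]
  calc ({v | v ∉ closedNbrs G D ∧ dom v ∉ X} ∩ closedNbr G m).ncard
      ≤ (residualNbr G D m).ncard := Set.ncard_le_ncard fun u hu ↦ ⟨hu.2, hu.1.1⟩
    _ ≤ (residualNbr G D (dom v)).ncard := (hdom v hvD).2 m (mem_closedNbr_comm.1 hvm)
    _ ≤ n := hX _ hvX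

theorem IsDominatingSet.ncard_phaseOneSet_union_image_le (hM : IsDominatingSet G M) {c : ℝ}
    (hG : Depth1DensityLE G c) (hk : 2 * c < k + 1)
    (hfree : (completeBipartiteGraph (Fin 3) (Fin t)).Free G) {dom : V → V}
    (hdom : ∀ v ∉ closedNbrs G (phaseOneSet G k), IsGreedyDominator G (phaseOneSet G k) v (dom v)) :
    (phaseOneSet G k ∪ dom '' (closedNbrs G (phaseOneSet G k))ᶜ).ncard ≤
      (t * k ^ 2 + 3 * k + 3) * M.ncard := by
  set D := phaseOneSet G k
  obtain ⟨π, hπ⟩ := hM.exists_isDominatorMap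
  have hcover : ∀ m ∈ M \ D, ∃ A, IsNbrCover G k m A := fun m hm ↦ not_not.1 hm.2
  choose! A hA using hcover
  let U := ⋃ m ∈ M \ D, A m
  let X := M ∪ busySet G M π k ∪ U
  let L := {v | v ∉ closedNbrs G D ∧ dom v ∉ X}
  have hU : U.ncard ≤ k * M.ncard :=
    (ncard_biUnion_le_mul fun m hm ↦ (hA m hm).ncard_le).trans
      (Nat.mul_le_mul_left _ (Set.ncard_le_ncard Set.sdiff_subset))
  have hX : X.ncard ≤ M.ncard + (k + 1) * M.ncard + k * M.ncard := by
    grw [Set.ncard_union_le, Set.ncard_union_le, hG.ncard_busySet_le hk hπ, hU]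
  have hL : L.ncard ≤ (t * k ^ 2 + k + 1) * M.ncard :=
    hM.ncard_greedy_notMem_le hdom fun w hw ↦ ncard_residualNbr_le hπ hfree hA hw
  have hout : D ∪ dom '' (closedNbrs G D)ᶜ ⊆ X ∪ dom '' L := by
    rintro _ (hv | ⟨v, hv, rfl⟩)
    · exact Or.inl (Or.inl (phaseOneSet_subset hπ hv))
    · exact or_iff_not_imp_left.2 fun hvX ↦ ⟨v, ⟨hv, hvX⟩, rfl⟩
  calc (D ∪ dom '' (closedNbrs G D)ᶜ).ncard
      ≤ (X ∪ dom '' L).ncard := Set.ncard_le_ncard hout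
    _ ≤ X.ncard + L.ncard :=
        (Set.ncard_union_le _ _).trans (Nat.add_le_add_left Set.ncard_image_le _)
    _ ≤ (M.ncard + (k + 1) * M.ncard + k * M.ncard) + (t * k ^ 2 + k + 1) * M.ncard :=
        add_le_add hX hL
    _ = (t * k ^ 2 + 3 * k + 3) * M.ncard := by ring

end Algorithm

theorem stmt12_general {V : Type} [Fintype V] (G : SimpleGraph V)
    (c : ℝ) (hc : 0 ≤ c) (t : ℕ) (hdens : Depth1DensityLE G c)
    (hex : ¬IsDepth1Minor G (completeBipartiteGraph (Fin 3) (Fin t)))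
    (D : Set V)
    (hD : D = {v | ¬∃ A : Set V, v ∉ A ∧ (A.ncard : ℝ) ≤ 2 * c ∧
      G.neighborSet v ⊆ closedNbrs G A})
    (R : Set V) (hR : R = Set.univ \ closedNbrs G D)
    (dom : V → V) (hdom : ∀ v ∈ R, IsGreedyDominator G D v (dom v)) :
    IsDominatingSet G (D ∪ dom '' R) ∧
    ((D ∪ dom '' R).ncard : ℝ) ≤ (4 * c ^ 2 * t + 6 * c + 3) * gamma G := by
  have hc2 : 0 ≤ 2 * c := by positivity
  rw [← Set.compl_eq_univ_sdiff] at hR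
  rw [← phaseOneSet_floor hc2] at hD
  subst hR
  refine ⟨isDominatingSet_union_image fun v hv ↦ (hdom v hv).1, ?_⟩
  obtain ⟨M, hM, hMcard⟩ := exists_isDominatingSet_ncard_eq_gamma G
  have hcard := hM.ncard_phaseOneSet_union_image_le hdens (Nat.lt_floor_add_one (2 * c))
    (fun h ↦ hex (isDepth1Minor_of_isContained h)) (hD ▸ hdom)
  rw [← hD, hMcard] at hcard
  have hfloor : (⌊2 * c⌋₊ : ℝ) ≤ 2 * c := Nat.floor_le hc2
  calc ((D ∪ dom '' (closedNbrs G D)ᶜ).ncard : ℝ)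
      ≤ (t * (⌊2 * c⌋₊ : ℝ) ^ 2 + 3 * ⌊2 * c⌋₊ + 3) * gamma G := by exact_mod_cast hcard
    _ ≤ (t * (2 * c) ^ 2 + 3 * (2 * c) + 3) * gamma G := by gcongr
    _ = (4 * c ^ 2 * t + 6 * c + 3) * gamma G := by ring

/-- Let `G` have all depth-1 minors of edge density at most `c` and exclude `K_{3,t}` as a
depth-1 minor.  The modified algorithm of Lenzen et al. computes: in Phase 1 the set `D` of all
vertices `v` whose open neighborhood cannot be dominated by at most `2c` other vertices; in
Phase 2, for each vertex `v ∈ R = V \ N[D]`, a dominator `dom v ∈ N[v]` of maximum residual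
degree `|N[w] \ N[D]|`.  The output `D ∪ dom(R)` is a dominating set of size at most
`(6c²t + (2t+5)c + 4)·γ(G)`. -/
theorem stmt12 {V : Type} [Fintype V] (G : SimpleGraph V)
    (c : ℝ) (hc : 1 ≤ c) (t : ℕ) (ht : 3 ≤ t)
    (hdens : ∀ (W : Type) [Fintype W] (H : SimpleGraph W), IsDepth1Minor G H →
      (H.edgeSet.ncard : ℝ) ≤ c * (Fintype.card W))
    (hex : ¬ IsDepth1Minor G (completeBipartiteGraph (Fin 3) (Fin t)))
    (D : Set V)
    (hD : D = {v | ¬ ∃ A : Set V, v ∉ A ∧ (A.ncard : ℝ) ≤ 2 * c ∧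
      G.neighborSet v ⊆ closedNbrs G A})
    (R : Set V) (hR : R = Set.univ \ closedNbrs G D)
    (dom : V → V)
    (hdom : ∀ v ∈ R, dom v ∈ closedNbr G v ∧
      ∀ w ∈ closedNbr G v, (closedNbr G w \ closedNbrs G D).ncard ≤
        (closedNbr G (dom v) \ closedNbrs G D).ncard) :
    IsDominatingSet G (D ∪ dom '' R) ∧
    ((D ∪ dom '' R).ncard : ℝ) ≤ (6 * c ^ 2 * t + (2 * t + 5) * c + 4) * gamma G := by
  have h := stmt12_general G c (zero_le_one.trans hc) t hdens hex D hD R hR dom hdom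
  have hct : c ≤ t * c := le_mul_of_one_le_left (by linarith) (by exact_mod_cast (by lia : 1 ≤ t))
  have hcct : 0 ≤ c ^ 2 * t := by positivity
  exact ⟨h.1, h.2.trans (mul_le_mul_of_nonneg_right (by linarith) (Nat.cast_nonneg _))⟩
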